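/- The assignment a_s ↦ e_s (s ∈ S) yields a well-defined surjective group homomorphism ψ : A_W → Ad(Q_W) from the Artin group A_W onto the adjoint group of the Coxeter quandle, and the canonical surjection π : A_W → W factors as φ ∘ ψ, where φ : Ad(Q_W) → W is the map e_x ↦ x. -/

import Mathlib

open Quandles Rack CoxeterSystem

variable {B : Type} [Fintype B] {W : Type} [Group W] {M : CoxeterMatrix B}

/-- The Coxeter quandle `Q_W`: the set of reflections of `W`, with operation given by
conjugation. (Since reflections are involutions, `x ◃ y = x y x⁻¹ = x⁻¹ y x`.) -/
def CoxeterQuandle (cs : CoxeterSystem M W) : Type := {w : W // cs.IsReflection w}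

instance (cs : CoxeterSystem M W) : Quandle (CoxeterQuandle cs) where
  act x y := ⟨x.1 * y.1 * x.1⁻¹, y.2.conj x.1⟩
  self_distrib := by
    rintro ⟨x, _⟩ ⟨y, _⟩ ⟨z, _⟩
    apply Subtype.ext
    show x * (y * z * y⁻¹) * x⁻¹ = (x * y * x⁻¹) * (x * z * x⁻¹) * (x * y * x⁻¹)⁻¹
    group
  invAct x y := ⟨x.1⁻¹ * y.1 * x.1, by simpa using y.2.conj x.1⁻¹⟩
  left_inv := by
    rintro ⟨x, _⟩ ⟨y, _⟩
    apply Subtype.ext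
    show x⁻¹ * (x * y * x⁻¹) * x = y
    group
  right_inv := by
    rintro ⟨x, _⟩ ⟨y, _⟩
    apply Subtype.ext
    show x * (x⁻¹ * y * x) * x⁻¹ = y
    group
  fix := by
    rintro ⟨x, hx⟩
    apply Subtype.ext
    show x * x * x⁻¹ = x
    group

/-- The canonical generator `e_x` of the adjoint (enveloping) group `Ad(Q_W)` of the
Coxeter quandle, associated with the reflection `x`. -/
def coxE (cs : CoxeterSystem M W) (x : CoxeterQuandle cs) :
    EnvelGroup (CoxeterQuandle cs) :=
  Rack.toEnvelGroup (CoxeterQuandle cs) x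

/-- The alternating product `(gh)_m = ghgh⋯` with `m` factors. -/
def altProd {G : Type*} [One G] [Mul G] (g h : G) : ℕ → G
  | 0 => 1
  | n + 1 => g * altProd h g n

/-- The braid relations defining the Artin group of the Coxeter matrix `M`. -/
def artinRels (M : CoxeterMatrix B) : Set (FreeGroup B) :=
  {r | ∃ s t : B, s ≠ t ∧ M s t ≠ 0 ∧
    r = altProd (FreeGroup.of s) (FreeGroup.of t) (M s t) *
        (altProd (FreeGroup.of t) (FreeGroup.of s) (M s t))⁻¹}

/-- The Artin group `A_W` associated with the Coxeter matrix `M`, presented by generators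
`a_s (s ∈ S)` and relations `(a_s a_t)_{m(s,t)} = (a_t a_s)_{m(s,t)}` for `s ≠ t` with
`m(s,t) < ∞` (the entry `0` of a Coxeter matrix encodes `m(s,t) = ∞`). -/
abbrev ArtinGroup (M : CoxeterMatrix B) : Type := PresentedGroup (artinRels M)

/-!
Let `e_x` denote the generators of `Ad(Q)`. Conjugation in `Ad(Q)` permutes these generators, so if
`Q` embeds in a group `G` as a subquandle of `Conj G`, then a conjugation relation
`g e_x g⁻¹ = e_y` holds in `Ad(Q)` as soon as its image holds in `G`. A braid relation says that an
alternating product conjugates one generator to another, hence it lifts from `W` to `Ad(Q_W)`,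
which gives `ψ`. For surjectivity, write a reflection as `w s w⁻¹` and lift `w` to `g` in the image
of `ψ`; the relation `g e_s g⁻¹ = e_{w s w⁻¹}` holds in `Ad(Q_W)` since it holds in `W`.
-/

section AltProd

theorem map_altProd {N P : Type*} [Monoid N] [Monoid P] (f : N →* P) (g h : N) (n : ℕ) :
    f (altProd g h n) = altProd (f g) (f h) n := by
  induction n generalizing g h with
  | zero => exact map_one f
  | succ n ih => simp only [altProd, map_mul, ih]

theorem altProd_succ_right {N : Type*} [Monoid N] (g h : N) (n : ℕ) :
    altProd g h (n + 1) = altProd g h n * if Even n then g else h := by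
  induction n generalizing g h with
  | zero => simp [altProd]
  | succ n ih =>
    calc altProd g h (n + 2) = g * (altProd h g n * if Even n then h else g) := by
          rw [← ih]; rfl
      _ = altProd g h (n + 1) * if Even (n + 1) then g else h := by
          simp only [altProd, mul_assoc, Nat.even_add_one, ite_not]

theorem altProd_succ_comm_iff {N : Type*} [Monoid N] (g h : N) (n : ℕ) :
    altProd g h (n + 1) = altProd h g (n + 1) ↔
      SemiconjBy (altProd g h n) (if Even n then g else h) h := by
  rw [altProd_succ_right]
  rfl

end AltProd

section EnvelGroup

variable {R G : Type*} [Rack R] [Group G]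

variable (R) in
theorem closure_range_toEnvelGroup : Subgroup.closure (Set.range (toEnvelGroup R)) = ⊤ := by
  refine Subgroup.eq_top_iff' _ |>.mpr fun g => ?_
  induction g using Quotient.inductionOn with | h a => ?_
  induction a with
  | unit => exact one_mem _
  | incl x => exact Subgroup.subset_closure ⟨x, rfl⟩
  | mul a b ha hb => exact mul_mem ha hb
  | inv a ha => exact inv_mem ha

theorem toEnvelGroup_envelAction (g : EnvelGroup R) (x : R) :
    toEnvelGroup R (envelAction g x) = g * toEnvelGroup R x * g⁻¹ := by
  have hg : g ∈ Subgroup.closure (Set.range (toEnvelGroup R)) :=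
    closure_range_toEnvelGroup R ▸ Subgroup.mem_top g
  induction hg using Subgroup.closure_induction generalizing x with
  | mem _ hy =>
    obtain ⟨y, rfl⟩ := hy
    rw [envelAction_prop]
    exact (toEnvelGroup R).map_act
  | one => simp
  | mul g h _ _ ihg ihh =>
    rw [map_mul, Equiv.Perm.mul_apply, ihg, ihh]
    group
  | inv g _ ih =>
    have hcancel : envelAction g (envelAction g⁻¹ x) = x := by
      rw [← Equiv.Perm.mul_apply, ← map_mul, mul_inv_cancel, map_one, Equiv.Perm.one_apply]
    have hx : toEnvelGroup R x = g * toEnvelGroup R (envelAction g⁻¹ x) * g⁻¹ := by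
      rw [← ih, hcancel]
    rw [hx]
    group

theorem toEnvelGroup_map_apply (f : R →◃ Quandle.Conj G) (x : R) :
    toEnvelGroup.map f (toEnvelGroup R x) = f x :=
  congrArg (fun k : R →◃ Quandle.Conj G => k x) (toEnvelGroup.univ R G f)

variable {f : R →◃ Quandle.Conj G}

theorem semiconjBy_toEnvelGroup_of_map (hf : Function.Injective f) {g : EnvelGroup R} {x y : R}
    (h : SemiconjBy (toEnvelGroup.map f g) (f x) (f y)) :
    SemiconjBy g (toEnvelGroup R x) (toEnvelGroup R y) := by
  have hy : envelAction g x = y := hf <| calc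
    f (envelAction g x) = toEnvelGroup.map f g * f x * (toEnvelGroup.map f g)⁻¹ := by
      rw [← toEnvelGroup_map_apply, toEnvelGroup_envelAction, map_mul, map_mul, map_inv,
        toEnvelGroup_map_apply]
    _ = f y := mul_inv_eq_iff_eq_mul.mpr h
  rw [← hy, toEnvelGroup_envelAction]
  exact SemiconjBy.conj_mk g _

theorem altProd_toEnvelGroup_comm (hf : Function.Injective f) {x y : R} {m : ℕ}
    (h : altProd (f x : G) (f y) m = altProd (f y : G) (f x) m) :
    altProd (toEnvelGroup R x : EnvelGroup R) (toEnvelGroup R y) m =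
      altProd (toEnvelGroup R y : EnvelGroup R) (toEnvelGroup R x) m := by
  cases m with
  | zero => rfl
  | succ n =>
    rw [altProd_succ_comm_iff, ← apply_ite] at h ⊢
    apply semiconjBy_toEnvelGroup_of_map hf
    rwa [map_altProd, toEnvelGroup_map_apply, toEnvelGroup_map_apply]

theorem subgroup_eq_top_of_map_eq_top (hf : Function.Injective f) {H : Subgroup (EnvelGroup R)}
    (hmap : H.map (toEnvelGroup.map f) = ⊤)
    (hconj : ∀ x, ∃ y, toEnvelGroup R y ∈ H ∧ IsConj (f y : G) (f x)) : H = ⊤ := by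
  rw [eq_top_iff, ← closure_range_toEnvelGroup R, Subgroup.closure_le]
  rintro _ ⟨x, rfl⟩
  obtain ⟨y, hy, w, hw⟩ := hconj x
  obtain ⟨g, hg, hgw⟩ : (w : G) ∈ H.map (toEnvelGroup.map f) := hmap ▸ Subgroup.mem_top _
  have hsemi : SemiconjBy g (toEnvelGroup R y) (toEnvelGroup R x) :=
    semiconjBy_toEnvelGroup_of_map hf (hgw ▸ hw)
  rw [← mul_inv_eq_iff_eq_mul.mpr hsemi.eq]
  exact mul_mem (mul_mem hg hy) (inv_mem hg)

end EnvelGroup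

section Coxeter

omit [Fintype B]

-- The inverse appears since `altProd s t` starts with `s` while `alternatingWord t s` ends in `s`.
theorem altProd_simple_eq_inv_wordProd (cs : CoxeterSystem M W) (s t : B) (n : ℕ) :
    altProd (cs.simple s) (cs.simple t) n = (cs.wordProd (alternatingWord t s n))⁻¹ := by
  induction n generalizing s t with
  | zero => simp [altProd, alternatingWord]
  | succ n ih =>
    rw [altProd, ih, alternatingWord_succ, wordProd_concat, mul_inv_rev, inv_simple]

theorem altProd_simple_comm (cs : CoxeterSystem M W) (s t : B) :
    altProd (cs.simple s) (cs.simple t) (M s t) = altProd (cs.simple t) (cs.simple s) (M s t) := by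
  have hbraid := cs.wordProd_braidWord_eq t s
  rw [braidWord, braidWord, M.symmetric t s] at hbraid
  rw [altProd_simple_eq_inv_wordProd, altProd_simple_eq_inv_wordProd, hbraid]

namespace CoxeterQuandle

variable (cs : CoxeterSystem M W)

/-- The simple reflection `s`, as an element of the Coxeter quandle. -/
def ofSimple (s : B) : CoxeterQuandle cs := ⟨cs.simple s, cs.isReflection_simple s⟩

/-- The inclusion of the Coxeter quandle in the conjugation quandle of `W`. The homomorphism
`φ : Ad(Q_W) → W` is the one it induces. -/
def toConj : CoxeterQuandle cs →◃ Quandle.Conj W where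
  toFun := Subtype.val
  map_act' := rfl

theorem toConj_injective : Function.Injective (toConj cs) := Subtype.val_injective

theorem lift_coxE_ofSimple_eq_one {r : FreeGroup B} (hr : r ∈ artinRels M) :
    FreeGroup.lift (fun s => coxE cs (ofSimple cs s)) r = 1 := by
  obtain ⟨s, t, -, -, rfl⟩ := hr
  rw [map_mul, map_inv, mul_inv_eq_one, map_altProd, map_altProd, FreeGroup.lift_apply_of,
    FreeGroup.lift_apply_of]
  exact altProd_toEnvelGroup_comm (toConj_injective cs) (altProd_simple_comm cs s t)

/-- The homomorphism `ψ : A_W → Ad(Q_W)` given by `a_s ↦ e_s`. -/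
def ofArtinGroup : ArtinGroup M →* EnvelGroup (CoxeterQuandle cs) :=
  PresentedGroup.toGroup fun _ => lift_coxE_ofSimple_eq_one cs

theorem ofArtinGroup_of (s : B) :
    ofArtinGroup cs (PresentedGroup.of s) = coxE cs (ofSimple cs s) :=
  PresentedGroup.toGroup.of _

theorem map_range_ofArtinGroup :
    (ofArtinGroup cs).range.map (toEnvelGroup.map (toConj cs)) = ⊤ := by
  rw [eq_top_iff, ← cs.subgroup_closure_range_simple, Subgroup.closure_le]
  rintro _ ⟨s, rfl⟩
  exact ⟨_, ⟨_, ofArtinGroup_of cs s⟩, toEnvelGroup_map_apply (toConj cs) (ofSimple cs s)⟩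

theorem ofArtinGroup_surjective : Function.Surjective (ofArtinGroup cs) := by
  refine MonoidHom.range_eq_top.mp <|
    subgroup_eq_top_of_map_eq_top (toConj_injective cs) (map_range_ofArtinGroup cs) ?_
  rintro ⟨_, w, s, rfl⟩
  exact ⟨ofSimple cs s, ⟨_, ofArtinGroup_of cs s⟩, isConj_iff.mpr ⟨w, rfl⟩⟩

end CoxeterQuandle

theorem stmt_9_general (cs : CoxeterSystem M W) :
    ∃ ψ : ArtinGroup M →* EnvelGroup (CoxeterQuandle cs),
      (∀ s : B, ψ (PresentedGroup.of s) =
        coxE cs ⟨cs.simple s, cs.isReflection_simple s⟩) ∧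
      Function.Surjective ψ ∧
      ∀ π : ArtinGroup M →* W, (∀ s : B, π (PresentedGroup.of s) = cs.simple s) →
        ∀ φ : EnvelGroup (CoxeterQuandle cs) →* W,
          (∀ x : CoxeterQuandle cs, φ (coxE cs x) = x.1) →
          π = φ.comp ψ := by
  refine ⟨CoxeterQuandle.ofArtinGroup cs, CoxeterQuandle.ofArtinGroup_of cs,
    CoxeterQuandle.ofArtinGroup_surjective cs, fun π hπ φ hφ => PresentedGroup.ext fun s => ?_⟩
  calc π (PresentedGroup.of s) = cs.simple s := hπ s
    _ = φ (coxE cs (CoxeterQuandle.ofSimple cs s)) := (hφ (CoxeterQuandle.ofSimple cs s)).symm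
    _ = φ (CoxeterQuandle.ofArtinGroup cs (PresentedGroup.of s)) := by
      rw [CoxeterQuandle.ofArtinGroup_of]

end Coxeter

/-- The assignment `a_s ↦ e_s` yields a well-defined surjective group homomorphism
`ψ : A_W → Ad(Q_W)`, and the canonical surjection `π : A_W → W`, `a_s ↦ s`, factors as
`π = φ ∘ ψ`, where `φ : Ad(Q_W) → W` is the homomorphism determined by `e_x ↦ x`. -/
theorem stmt_9 (cs : CoxeterSystem M W) :
    ∃ ψ : ArtinGroup M →* EnvelGroup (CoxeterQuandle cs),
      (∀ s : B, ψ (PresentedGroup.of s) =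
        coxE cs ⟨cs.simple s, cs.isReflection_simple s⟩) ∧
      Function.Surjective ψ ∧
      ∀ π : ArtinGroup M →* W, (∀ s : B, π (PresentedGroup.of s) = cs.simple s) →
        ∀ φ : EnvelGroup (CoxeterQuandle cs) →* W,
          (∀ x : CoxeterQuandle cs, φ (coxE cs x) = x.1) →
          π = φ.comp ψ :=
  stmt_9_general cs
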